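/- arXiv:1805.07786 — 3 statements merged into one kernel-verified Lean document; each statement's English description precedes it below -/
import Mathlib

section
/- Let n ≥ 1 be an integer and let μ, L be reals with 0 < μ ≤ L. Set κ = L/μ, m = n + 121κ, and η = √(κ/m)/(2L). Then the Prox-SVRG convergence factor ρ = (1 + μη(1 + 4mLη)) / (μηm(1 − 4Lη)) satisfies ρ ≤ 10·√(κ/m) = √(100/(121 + n/κ)). (In particular 4Lη = 2√(κ/m) ≤ 2/11 < 1, so the denominator is positive.) -/
/-- Corollary 2 of the paper (rate bound for Prox-SVRG with m = n + 121κ and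
η = √(κ/m)/(2L)): the per-epoch factor ρ satisfies ρ ≤ 10√(κ/m) = √(100/(121 + n/κ)). -/
theorem prox_svrg_rate_bound (n : ℕ) (hn : 1 ≤ n) (μ L : ℝ) (hμ : 0 < μ) (hμL : μ ≤ L) :
    let κ : ℝ := L / μ
    let m : ℝ := (n : ℝ) + 121 * κ
    let η : ℝ := Real.sqrt (κ / m) / (2 * L)
    let ρ : ℝ := (1 + μ * η * (1 + 4 * m * L * η)) / (μ * η * m * (1 - 4 * L * η))
    ρ ≤ 10 * Real.sqrt (κ / m) ∧
      10 * Real.sqrt (κ / m) = Real.sqrt (100 / (121 + (n : ℝ) / κ)) := by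
  intro κ m η ρ
  have hL : 0 < L := lt_of_lt_of_le hμ hμL
  have hκ1 : 1 ≤ κ := (one_le_div hμ).2 hμL
  have hκ : 0 < κ := by linarith
  have hn0 : (0 : ℝ) ≤ n := Nat.cast_nonneg n
  have hm : 0 < m := by simp only [m]; linarith
  have hm121 : 121 * κ ≤ m := by simp only [m]; linarith
  have hLκ : L = κ * μ := by simp only [κ]; field_simp
  have hη : η = √(κ / m) / (2 * L) := rfl
  have hρ : ρ = (1 + μ * η * (1 + 4 * m * L * η)) / (μ * η * m * (1 - 4 * L * η)) := rfl
  have hmdef : m = n + 121 * κ := rfl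
  have hs : 0 < √(κ / m) := Real.sqrt_pos.2 (div_pos hκ hm)
  have hs2 : √(κ / m) ^ 2 = κ / m := Real.sq_sqrt (div_pos hκ hm).le
  constructor
  · clear_value ρ η m κ
    generalize √(κ / m) = s at *
    have hsm : κ = s ^ 2 * m := by rw [hs2]; field_simp
    have hs11 : s ≤ 1 / 11 := by
      have h1 : s ^ 2 ≤ 1 / 121 := by
        rw [hs2, div_le_div_iff₀ hm (by norm_num)]; linarith
      nlinarith
    have h4 : 4 * L * η = 2 * s := by rw [hη]; field_simp; norm_num
    have hμη : μ * η = s / (2 * κ) := by rw [hη, hLκ]; field_simp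
    have h5 : 4 * m * L * η = 2 * s * m := by rw [← h4]; ring
    have hnum : 1 + μ * η * (1 + 4 * m * L * η) = 2 + s / (2 * κ) := by
      have : s ^ 2 * m / κ = 1 := by rw [← hsm]; exact div_self hκ.ne'
      rw [hμη, h5]
      calc _ = 1 + s / (2 * κ) + s ^ 2 * m / κ := by field_simp; ring
        _ = _ := by rw [this]; ring
    have hden : μ * η * m = 1 / (2 * s) := by
      rw [hμη, hsm]; field_simp
    have h6 : s / (2 * κ) ≤ 1 / 22 := by
      rw [div_le_div_iff₀ (by positivity) (by norm_num)]; linarith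
    rw [hρ, hnum, hden, h4, div_le_iff₀ (mul_pos (by positivity) (by linarith))]
    have : 10 * s * (1 / (2 * s) * (1 - 2 * s)) = 5 * (1 - 2 * s) := by field_simp; ring
    rw [this]; linarith
  · have h : 100 / (121 + (n : ℝ) / κ) = (10 * √(κ / m)) ^ 2 := by
      rw [mul_pow, hs2, hmdef]
      have : 0 < (n : ℝ) + 121 * κ := hm
      have : 0 < 121 + (n : ℝ) / κ := by positivity
      clear_value κ
      field_simp
      ring
    rw [h, Real.sqrt_sq (by positivity)]
end

section
/- Let n ≥ 1 be an integer and let c > 0, μ > 0 be reals. Let J be the n×n all-ones real matrix, Y = c·(n²·I + J), and define D : ℝⁿ → ℝ by D(α) = ‖Yα‖²/(2μn²) + ‖α‖²/(2n). Fix an index i and a vector α ∈ ℝⁿ, and set β = (c² + 2c²n)/(c²n³ + 2c²n + c² + μ) and z* = −β · Σ_{j ≠ i} α_j. Then the function z ↦ D(α with its i-th coordinate replaced by z) is minimized at z = z*: for every real z, D(update α i z*) ≤ D(update α i z). -/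
/-- Coordinate-minimization step in the proof of Proposition 1 (SDCA lower
bound): for the dual objective D(α) = ‖Yα‖²/(2μn²) + ‖α‖²/(2n) with
Y = c(n²I + J), the minimizer over the i-th coordinate is
z* = −β ∑_{j≠i} α_j with β = (c² + 2c²n)/(c²n³ + 2c²n + c² + μ). -/
theorem sdca_coordinate_minimization (n : ℕ) (hn : 1 ≤ n) (c μ : ℝ)
    (hc : 0 < c) (hμ : 0 < μ) (i : Fin n) (α : Fin n → ℝ) :
    let J : Matrix (Fin n) (Fin n) ℝ := Matrix.of fun _ _ => 1
    let Y : Matrix (Fin n) (Fin n) ℝ := c • ((n : ℝ) ^ 2 • (1 : Matrix (Fin n) (Fin n) ℝ) + J)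
    let D : (Fin n → ℝ) → ℝ := fun v =>
      (∑ j, (Y.mulVec v j) ^ 2) / (2 * μ * (n : ℝ) ^ 2) + (∑ j, (v j) ^ 2) / (2 * (n : ℝ))
    let β : ℝ := (c ^ 2 + 2 * c ^ 2 * n) / (c ^ 2 * (n : ℝ) ^ 3 + 2 * c ^ 2 * n + c ^ 2 + μ)
    let zstar : ℝ := -β * ∑ j ∈ Finset.univ.erase i, α j
    ∀ z : ℝ, D (Function.update α i zstar) ≤ D (Function.update α i z) := by
  intro J Y D β zstar z
  have hn0 : (0 : ℝ) < n := by exact_mod_cast hn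
  have hY : ∀ (v : Fin n → ℝ) (j : Fin n),
      Y.mulVec v j = c * ((n : ℝ) ^ 2 * v j + ∑ k, v k) := by
    intro v j
    have hJ : J.mulVec v j = ∑ k, v k := by
      simp [J, Matrix.mulVec, dotProduct]
    simp only [Y, Matrix.smul_mulVec, Matrix.add_mulVec, Matrix.one_mulVec, Pi.smul_apply,
      Pi.add_apply, smul_eq_mul, hJ]
  have hQ : ∀ v : Fin n → ℝ, ∑ j, (Y.mulVec v j) ^ 2
      = c ^ 2 * ((n : ℝ) ^ 4 * ∑ j, (v j) ^ 2 + (2 * (n : ℝ) ^ 2 + n) * (∑ j, v j) ^ 2) := by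
    intro v
    simp only [hY]
    generalize hS : ∑ k, v k = S
    have h1 : ∀ j, (c * ((n : ℝ) ^ 2 * v j + S)) ^ 2
        = c ^ 2 * (n : ℝ) ^ 4 * (v j) ^ 2 + 2 * c ^ 2 * (n : ℝ) ^ 2 * S * v j + c ^ 2 * S ^ 2 := by
      intro j; ring
    simp only [h1, Finset.sum_add_distrib, ← Finset.mul_sum, hS, Finset.sum_const,
      Finset.card_univ, Fintype.card_fin, nsmul_eq_mul]
    ring
  have hD : ∀ v : Fin n → ℝ, D v = ((c ^ 2 * (n : ℝ) ^ 3 + μ) * ∑ j, (v j) ^ 2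
      + c ^ 2 * (2 * n + 1) * (∑ j, v j) ^ 2) / (2 * μ * n) := by
    intro v
    simp only [D, hQ]
    field_simp
    ring
  have hsum : ∀ w : ℝ, ∑ j, Function.update α i w j = w + ∑ j ∈ Finset.univ.erase i, α j := by
    intro w
    rw [← Finset.add_sum_erase _ _ (Finset.mem_univ i), Function.update_self]
    congr 1
    apply Finset.sum_congr rfl
    intro j hj
    rw [Function.update_of_ne (Finset.ne_of_mem_erase hj)]
  have hsq : ∀ w : ℝ, ∑ j, (Function.update α i w j) ^ 2
      = w ^ 2 + ∑ j ∈ Finset.univ.erase i, (α j) ^ 2 := by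
    intro w
    rw [← Finset.add_sum_erase _ _ (Finset.mem_univ i), Function.update_self]
    congr 1
    apply Finset.sum_congr rfl
    intro j hj
    rw [Function.update_of_ne (Finset.ne_of_mem_erase hj)]
  rw [hD, hD, hsum, hsum, hsq, hsq]
  have hA : 0 < c ^ 2 * (n : ℝ) ^ 3 + 2 * c ^ 2 * n + c ^ 2 + μ := by positivity
  have hz : (c ^ 2 * (n : ℝ) ^ 3 + 2 * c ^ 2 * n + c ^ 2 + μ) * zstar
      = -(c ^ 2 + 2 * c ^ 2 * n) * ∑ j ∈ Finset.univ.erase i, α j := by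
    simp only [zstar, β]
    field_simp
  clear_value zstar
  generalize ∑ j ∈ Finset.univ.erase i, α j = T at *
  generalize ∑ j ∈ Finset.univ.erase i, (α j) ^ 2 = R at *
  apply div_le_div_of_nonneg_right _ (by positivity)
  have h2 := mul_nonneg hA.le (sq_nonneg (z - zstar))
  linear_combination h2 - 2 * (z - zstar) * hz
end

section
/- Let τ > 0 and c ≥ 0 be reals and let a, b : ℕ → ℝ be sequences with a_j ≥ 0 and b_j ≥ 0 for all j, satisfying 2(1 + τ)·a_{j+1} − a_j ≤ c·(b_j − (1 + τ)·b_{j+1}) for every j. Then for every k, (1 + τ)^k · a_k ≤ a_0 + c·b_0. In particular, if additionally c·b_0 ≤ (1 + 1/(2τ))·a_0, then (1 + τ)^k · a_k ≤ (2 + 1/(2τ))·a_0 for every k. -/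
/-- Telescoping argument in the proof of Theorem 5: if
2(1+τ)a_{j+1} − a_j ≤ c(b_j − (1+τ)b_{j+1}) for all j with a, b nonnegative,
then (1+τ)^k a_k ≤ a_0 + c b_0; and if moreover c b_0 ≤ (1 + 1/(2τ)) a_0,
then (1+τ)^k a_k ≤ (2 + 1/(2τ)) a_0. -/
theorem svrg_telescoping (τ c : ℝ) (hτ : 0 < τ) (hc : 0 ≤ c) (a b : ℕ → ℝ)
    (ha : ∀ j, 0 ≤ a j) (hb : ∀ j, 0 ≤ b j)
    (h : ∀ j, 2 * (1 + τ) * a (j + 1) - a j ≤ c * (b j - (1 + τ) * b (j + 1))) :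
    (∀ k, (1 + τ) ^ k * a k ≤ a 0 + c * b 0) ∧
      (c * b 0 ≤ (1 + 1 / (2 * τ)) * a 0 →
        ∀ k, (1 + τ) ^ k * a k ≤ (2 + 1 / (2 * τ)) * a 0) := by
  have key : ∀ k, (1 + τ) ^ k * (a k + c * b k) ≤ a 0 + c * b 0 := by
    intro k
    induction k with
    | zero => simp
    | succ k ih =>
      have h1 : (1 + τ) * (a (k + 1) + c * b (k + 1)) ≤ a k + c * b k := by
        have := h k
        have h2 : 0 ≤ (1 + τ) * a (k + 1) := mul_nonneg (by linarith) (ha _)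
        linarith
      have h3 : (0 : ℝ) ≤ (1 + τ) ^ k := by positivity
      have h4 := mul_le_mul_of_nonneg_left h1 h3
      rw [pow_succ, mul_assoc]
      exact h4.trans ih
  have main : ∀ k, (1 + τ) ^ k * a k ≤ a 0 + c * b 0 := by
    intro k
    have h3 : (0 : ℝ) ≤ (1 + τ) ^ k := by positivity
    have h5 := mul_nonneg h3 (mul_nonneg hc (hb k))
    have := key k
    rw [mul_add] at this
    linarith
  refine ⟨main, fun h0 k => ?_⟩
  have := main k
  linarith
end
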